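/- Full abstraction of HOCRWL semantics with respect to first-order observations Obs_FO: for any program P without extra variables and any expressions e, e', one has ⟦e⟧^P = ⟦e'⟧^P if and only if Obs_FO^{P'}(C[e]) = Obs_FO^{P'}(C[e']) for every program P' safely extending both (P, e) and (P, e') and every context C built with the signature of P'. -/

import Mathlib

/-!
Full abstraction combines three facts about the calculus.

*Compositionality* (`Deriv.fill_mono`): replacing a subexpression by one with a larger denotation
enlarges the denotation of the whole.  In argument position this is a direct induction on the
derivation.  In operator position it uses that `e d ⇒ t` holds iff `e ⇒ s` and `s d ⇒ t` for some
pattern `s` (`Deriv.app_split`, `Deriv.app_join`); the second half needs transitivity of `⇒`.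

*Conservativity* (`Deriv.conservative`): in a safe extension, an expression over the old symbols
has exactly its old values.  The definitions that are added concern no symbol that can be reached,
and as rules have no extra variables, no new symbol can enter through a substitution.  Together
with compositionality, this shows that equal denotations give equal observations.

*A test for each pattern* (`deriv_testVal_iff`): let `t` be a partial pattern, and let `lin t`
arise from `t` by replacing each occurrence of a variable or of `⊥` by a fresh variable.  Add a
unary function symbol `g`, a constructor `T`, and the single rule `g (lin t) → T y₁ … yₖ`, where
the `yᵢ` are the fresh variables that replace the variable occurrences `X₁, …, Xₖ` of `t`.  Then
`T X₁ … Xₖ` is a first-order pattern, and `g a` has this value iff `a` has the value `t`.  So the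
context `g [ ]` separates any two expressions of which only one has the value `t`.
-/

/-- A signature: function symbols and constructor symbols, each with an arity. -/
structure Sig where
  FS : Type
  CS : Type
  arityF : FS → ℕ
  arityC : CS → ℕ

/-- Applicative partial expressions over a signature.  Variables are natural
numbers and `bot` is the distinguished 0-ary constructor `⊥`. -/
inductive Exp (σ : Sig) : Type where
  | var : ℕ → Exp σ
  | fn : σ.FS → Exp σ
  | cn : σ.CS → Exp σ
  | bot : Exp σ
  | app : Exp σ → Exp σ → Exp σ

variable {σ : Sig}

/-- `applyList e [e1, …, en]` is the curried application `e e1 … en`. -/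
def applyList (e : Exp σ) (es : List (Exp σ)) : Exp σ := es.foldl Exp.app e

/-- Partial patterns `Pat_⊥`. -/
inductive IsPPat : Exp σ → Prop where
  | var (x : ℕ) : IsPPat (Exp.var x)
  | bot : IsPPat (Exp.bot : Exp σ)
  | capp (c : σ.CS) (ts : List (Exp σ)) (har : ts.length ≤ σ.arityC c)
      (hts : ∀ t ∈ ts, IsPPat t) : IsPPat (applyList (Exp.cn c) ts)
  | fapp (f : σ.FS) (ts : List (Exp σ)) (har : ts.length < σ.arityF f)
      (hts : ∀ t ∈ ts, IsPPat t) : IsPPat (applyList (Exp.fn f) ts)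

/-- The constructor `⊥` does not occur in the expression. -/
def BotFree : Exp σ → Prop
  | .bot => False
  | .app a b => BotFree a ∧ BotFree b
  | _ => True

/-- Total patterns `Pat`. -/
def IsPat (t : Exp σ) : Prop := IsPPat t ∧ BotFree t

/-- First-order patterns `FOPat`. -/
inductive IsFOPat : Exp σ → Prop where
  | var (x : ℕ) : IsFOPat (Exp.var x)
  | capp (c : σ.CS) (ts : List (Exp σ)) (har : ts.length = σ.arityC c)
      (hts : ∀ t ∈ ts, IsFOPat t) : IsFOPat (applyList (Exp.cn c) ts)

/-- The list of occurrences of variables in an expression. -/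
def occVars : Exp σ → List ℕ
  | .var x => [x]
  | .app a b => occVars a ++ occVars b
  | _ => []

/-- Applying a substitution to an expression. -/
def subst (θ : ℕ → Exp σ) : Exp σ → Exp σ
  | .var x => θ x
  | .fn f => .fn f
  | .cn c => .cn c
  | .bot => .bot
  | .app a b => .app (subst θ a) (subst θ b)

/-- Partial-pattern substitutions `PSubst_⊥`. -/
def PSub (θ : ℕ → Exp σ) : Prop := ∀ x, IsPPat (θ x)

/-- A program rule `f t1 … tn → r` (the left-hand side is `f` applied to `lhs`). -/
structure Rule (σ : Sig) where
  fn : σ.FS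
  lhs : List (Exp σ)
  rhs : Exp σ

/-- Well-formedness of a rule: `f` is applied to as many arguments as its arity,
the arguments form a linear tuple of total patterns. -/
def Rule.WF (r : Rule σ) : Prop :=
  r.lhs.length = σ.arityF r.fn ∧ (∀ t ∈ r.lhs, IsPat t) ∧
    (r.lhs.flatMap occVars).Nodup

/-- The rule has no extra variables: all variables of the right-hand side occur
in the left-hand side. -/
def Rule.NoExtra (r : Rule σ) : Prop :=
  ∀ x ∈ occVars r.rhs, x ∈ r.lhs.flatMap occVars

abbrev Program (σ : Sig) := Set (Rule σ)

/-- A program without extra variables, all whose rules are well formed. -/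
def WFProg (P : Program σ) : Prop := ∀ r ∈ P, r.WF ∧ r.NoExtra

/-- `h ∈ Σ` (a function symbol, a constructor symbol, or `⊥`). -/
def IsSymb : Exp σ → Prop
  | .fn _ => True
  | .cn _ => True
  | .bot => True
  | _ => False

/-- HOCRWL derivation trees for statements `e ⇒ t`, with rules
(B), (RR), (DC) and (OR). -/
inductive DTree (P : Program σ) : Exp σ → Exp σ → Type where
  | bot (e : Exp σ) : DTree P e Exp.bot
  | rr (x : ℕ) : DTree P (Exp.var x) (Exp.var x)
  | dc (h : Exp σ) (es ts : List (Exp σ)) (hsym : IsSymb h)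
      (hlen : es.length = ts.length) (hpat : IsPPat (applyList h ts))
      (ds : ∀ p ∈ es.zip ts, DTree P p.1 p.2) :
      DTree P (applyList h es) (applyList h ts)
  | opr (r : Rule σ) (hr : r ∈ P) (θ : ℕ → Exp σ) (hθ : PSub θ)
      (es as : List (Exp σ)) (t : Exp σ) (hlen : es.length = r.lhs.length)
      (ds : ∀ p ∈ es.zip (r.lhs.map (subst θ)), DTree P p.1 p.2)
      (d : DTree P (applyList (subst θ r.rhs) as) t) :
      DTree P (applyList (Exp.fn r.fn) (es ++ as)) t

/-- `P ⊢ e ⇒ t` is derivable in the HOCRWL proof calculus. -/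
def Deriv (P : Program σ) (e t : Exp σ) : Prop := Nonempty (DTree P e t)

/-- The HOCRWL denotation `⟦e⟧^P = { t ∈ Pat_⊥ | P ⊢ e ⇒ t }`. -/
def den (P : Program σ) (e : Exp σ) : Set (Exp σ) := {t | IsPPat t ∧ Deriv P e t}

/-- Observations: total patterns in the denotation. -/
def Obs (P : Program σ) (e : Exp σ) : Set (Exp σ) := {t | t ∈ den P e ∧ BotFree t}

/-- First-order observations: first-order patterns in the denotation. -/
def ObsFO (P : Program σ) (e : Exp σ) : Set (Exp σ) := {t | t ∈ den P e ∧ IsFOPat t}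

/-- Contexts `C ::= [ ] | C e | e C`. -/
inductive Cntxt (σ : Sig) : Type where
  | hole : Cntxt σ
  | appL : Cntxt σ → Exp σ → Cntxt σ
  | appR : Exp σ → Cntxt σ → Cntxt σ

/-- Filling the hole of a context with an expression. -/
def Cntxt.fill : Cntxt σ → Exp σ → Exp σ
  | .hole, e => e
  | .appL C e', e => .app (C.fill e) e'
  | .appR e' C, e => .app e' (C.fill e)

/-- Function symbols occurring in an expression. -/
def expFS : Exp σ → Set σ.FS
  | .fn f => {f}
  | .app a b => expFS a ∪ expFS b
  | _ => ∅

/-- Function symbols occurring in a rule. -/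
def ruleFS (r : Rule σ) : Set σ.FS :=
  insert r.fn ((⋃ t ∈ r.lhs, expFS t) ∪ expFS r.rhs)

/-- Function symbols occurring in a program. -/
def progFS (P : Program σ) : Set σ.FS := ⋃ r ∈ P, ruleFS r

/-- Function symbols defined by a program (roots of left-hand sides). -/
def defs (P : Program σ) : Set σ.FS := Rule.fn '' P

/-- `P'` is a safe extension of `(P, e)`: `P' = P ⊎ P''` where `P''` defines no
function symbol occurring in `P` or in `e`. -/
def SafeExt (P P' : Program σ) (e : Exp σ) : Prop :=
  ∃ P'' : Program σ, P' = P ∪ P'' ∧ Disjoint P P'' ∧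
    Disjoint (defs P'') (expFS e ∪ progFS P)

/-- `e ∼ₙ e'` : `n`-extensional equivalence. -/
def ExtEquiv (P : Program σ) (n : ℕ) (e e' : Exp σ) : Prop :=
  ∀ es : List (Exp σ), es.length = n →
    den P (applyList e es) = den P (applyList e' es)

/-- An (injective, arity-preserving) extension of signatures, embedding the
signature of `P` into a possibly larger signature providing fresh auxiliary
symbols. -/
structure SigHom (σ τ : Sig) where
  onF : σ.FS → τ.FS
  onC : σ.CS → τ.CS
  injF : Function.Injective onF
  injC : Function.Injective onC
  arF : ∀ f, τ.arityF (onF f) = σ.arityF f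
  arC : ∀ c, τ.arityC (onC c) = σ.arityC c

def SigHom.mapExp {σ τ : Sig} (ι : SigHom σ τ) : Exp σ → Exp τ
  | .var x => .var x
  | .fn f => .fn (ι.onF f)
  | .cn c => .cn (ι.onC c)
  | .bot => .bot
  | .app a b => .app (ι.mapExp a) (ι.mapExp b)

def SigHom.mapRule {σ τ : Sig} (ι : SigHom σ τ) (r : Rule σ) : Rule τ :=
  ⟨ι.onF r.fn, r.lhs.map ι.mapExp, ι.mapExp r.rhs⟩

def SigHom.mapProg {σ τ : Sig} (ι : SigHom σ τ) (P : Program σ) : Program τ :=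
  ι.mapRule '' P

/-! ### Applicative spines and patterns -/

/-- An expression that is not an application; exactly the heads of spines. -/
def Atom : Exp σ → Prop
  | .app _ _ => False
  | _ => True

/-- `okLen h n`: an atom `h` applied to `n` patterns is again a partial pattern. -/
def okLen : Exp σ → ℕ → Prop
  | .fn f, n => n < σ.arityF f
  | .cn c, n => n ≤ σ.arityC c
  | .app _ _, _ => False
  | _, n => n = 0

theorem IsSymb.atom {h : Exp σ} (hs : IsSymb h) : Atom h := by
  cases h <;> simp_all [IsSymb, Atom]

theorem okLen.mono {h : Exp σ} {m n : ℕ} (hn : okLen h n) (hm : m ≤ n) : okLen h m := by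
  cases h <;> simp_all [okLen] <;> omega

@[simp] theorem applyList_nil (h : Exp σ) : applyList h [] = h := rfl

@[simp] theorem applyList_concat (h : Exp σ) (es : List (Exp σ)) (a : Exp σ) :
    applyList h (es ++ [a]) = .app (applyList h es) a := by
  simp [applyList]

theorem applyList_inj {h h' : Exp σ} (ha : Atom h) (ha' : Atom h') {es es' : List (Exp σ)}
    (he : applyList h es = applyList h' es') : h = h' ∧ es = es' := by
  induction es using List.reverseRecOn generalizing es' with
  | nil =>
    rcases List.eq_nil_or_concat' es' with rfl | ⟨l, a, rfl⟩
    · exact ⟨he, rfl⟩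
    · simp at he; subst he; exact ha.elim
  | append_singleton l a ih =>
    rcases List.eq_nil_or_concat' es' with rfl | ⟨l', a', rfl⟩
    · simp at he; subst he; exact ha'.elim
    · simp at he
      obtain ⟨h1, h2⟩ := ih he.1
      simp [h1, h2, he.2]

theorem exists_spine (e : Exp σ) : ∃ h es, Atom h ∧ e = applyList h es := by
  induction e with
  | app a b iha _ =>
    obtain ⟨h, es, hh, rfl⟩ := iha
    exact ⟨h, es ++ [b], hh, by simp⟩
  | _ => exact ⟨_, [], by trivial, rfl⟩

/-- Splitting off the last argument of a spine that is an application. -/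
theorem spine_eq_app {h : Exp σ} (hh : Atom h) {es : List (Exp σ)} {a b : Exp σ}
    (he : applyList h es = .app a b) : ∃ es', es = es' ++ [b] ∧ a = applyList h es' := by
  rcases List.eq_nil_or_concat' es with rfl | ⟨l, c, rfl⟩
  · simp at he; subst he; exact hh.elim
  · simp at he; exact ⟨l, by rw [he.2], he.1.symm⟩

theorem isPPat_of {h : Exp σ} {ts : List (Exp σ)} (hl : okLen h ts.length)
    (hts : ∀ t ∈ ts, IsPPat t) : IsPPat (applyList h ts) := by
  cases h with
  | fn f => exact .fapp f ts hl hts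
  | cn c => exact .capp c ts hl hts
  | var x => simp [okLen] at hl; subst hl; exact .var x
  | bot => simp [okLen] at hl; subst hl; exact .bot
  | app => exact hl.elim

/-- Structural induction on partial patterns, uniform in the head atom. -/
theorem IsPPat.spine_ind {motive : (t : Exp σ) → IsPPat t → Prop}
    (step : ∀ h ts, Atom h → (hl : okLen h ts.length) → (hts : ∀ t ∈ ts, IsPPat t) →
      (∀ t ht, motive t (hts t ht)) → motive (applyList h ts) (isPPat_of hl hts))
    {t : Exp σ} (ht : IsPPat t) : motive t ht := by
  induction ht with
  | var x => exact step (.var x) [] trivial rfl (by simp) (by simp)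
  | bot => exact step .bot [] trivial rfl (by simp) (by simp)
  | capp c ts har hts ih => exact step (.cn c) ts trivial har hts ih
  | fapp c ts har hts ih => exact step (.fn c) ts trivial har hts ih

theorem isPPat_applyList {h : Exp σ} (hh : Atom h) {ts : List (Exp σ)} :
    IsPPat (applyList h ts) ↔ okLen h ts.length ∧ ∀ t ∈ ts, IsPPat t := by
  refine ⟨fun hp => ?_, fun hp => isPPat_of hp.1 hp.2⟩
  generalize hx : applyList h ts = x at hp
  induction hp using IsPPat.spine_ind with
  | step h' ts' hh' hl hts _ =>
    obtain ⟨rfl, rfl⟩ := applyList_inj hh hh' hx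
    exact ⟨hl, hts⟩

@[simp] theorem subst_applyList (θ : ℕ → Exp σ) (h : Exp σ) (ts : List (Exp σ)) :
    subst θ (applyList h ts) = applyList (subst θ h) (ts.map (subst θ)) := by
  induction ts using List.reverseRecOn with
  | nil => rfl
  | append_singleton l a ih => simp [subst, ih]

@[simp] theorem mapExp_applyList {τ : Sig} (ι : SigHom σ τ) (h : Exp σ) (ts : List (Exp σ)) :
    ι.mapExp (applyList h ts) = applyList (ι.mapExp h) (ts.map ι.mapExp) := by
  induction ts using List.reverseRecOn with
  | nil => rfl
  | append_singleton l a ih => simp [SigHom.mapExp, ih]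

theorem mem_occVars_applyList {x : ℕ} {h : Exp σ} {ts : List (Exp σ)} :
    x ∈ occVars (applyList h ts) ↔ x ∈ occVars h ∨ ∃ t ∈ ts, x ∈ occVars t := by
  induction ts using List.reverseRecOn with
  | nil => simp
  | append_singleton l a ih => simp [occVars, ih, or_and_right, exists_or, or_assoc]

theorem mem_expFS_applyList {x : σ.FS} {h : Exp σ} {ts : List (Exp σ)} :
    x ∈ expFS (applyList h ts) ↔ x ∈ expFS h ∨ ∃ t ∈ ts, x ∈ expFS t := by
  induction ts using List.reverseRecOn with
  | nil => simp
  | append_singleton l a ih => simp [expFS, ih, or_and_right, exists_or, or_assoc]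

theorem subst_congr {θ θ' : ℕ → Exp σ} {e : Exp σ} (h : ∀ x ∈ occVars e, θ x = θ' x) :
    subst θ e = subst θ' e := by
  induction e with
  | var x => exact h x (by simp [occVars])
  | app a b iha ihb =>
    simp only [occVars, List.mem_append] at h
    simp only [subst, iha fun x hx => h x (.inl hx), ihb fun x hx => h x (.inr hx)]
  | _ => rfl

theorem IsPPat.subst {θ : ℕ → Exp σ} {p : Exp σ} (hp : IsPPat p)
    (hθ : ∀ x ∈ occVars p, IsPPat (θ x)) : IsPPat (subst θ p) := by
  induction hp using IsPPat.spine_ind with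
  | step h ts hh hl hts ih =>
    simp only [mem_occVars_applyList] at hθ
    cases h with
    | var x =>
      simp [okLen] at hl; subst hl
      exact hθ x (by simp [occVars])
    | app => exact hh.elim
    | _ =>
      rw [subst_applyList]
      refine isPPat_of (by simpa [_root_.subst, okLen] using hl) ?_
      simp only [List.mem_map, forall_exists_index, and_imp]
      rintro _ t ht rfl
      exact ih t ht fun x hx => hθ x (.inr ⟨t, ht, hx⟩)

/-! ### The proof calculus in terms of `List.Forall₂` -/

variable {P : Program σ}

theorem Deriv.bot (e : Exp σ) : Deriv P e .bot := ⟨.bot e⟩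

theorem Deriv.rr (x : ℕ) : Deriv P (.var x) (.var x) := ⟨.rr x⟩

theorem Deriv.dc {h : Exp σ} {es ts : List (Exp σ)} (hs : IsSymb h)
    (hp : IsPPat (applyList h ts)) (hd : List.Forall₂ (Deriv P) es ts) :
    Deriv P (applyList h es) (applyList h ts) := by
  rw [List.forall₂_iff_zip] at hd
  exact ⟨.dc h es ts hs hd.1 hp fun p hp => (hd.2 (show (p.1, p.2) ∈ _ from hp)).some⟩

theorem Deriv.opr {r : Rule σ} (hr : r ∈ P) {θ : ℕ → Exp σ} (hθ : PSub θ)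
    {es as : List (Exp σ)} {t : Exp σ}
    (hd : List.Forall₂ (Deriv P) es (r.lhs.map (subst θ)))
    (d : Deriv P (applyList (subst θ r.rhs) as) t) :
    Deriv P (applyList (.fn r.fn) (es ++ as)) t := by
  rw [List.forall₂_iff_zip] at hd
  exact ⟨.opr r hr θ hθ es as t (by simpa using hd.1)
    (fun p hp => (hd.2 (show (p.1, p.2) ∈ _ from hp)).some) d.some⟩

/-- Rule induction for derivability, with the premises on argument lists in `Forall₂` form. -/
theorem Deriv.ind {motive : (e t : Exp σ) → Deriv P e t → Prop}
    (bot : ∀ e, motive e .bot (.bot e)) (rr : ∀ x, motive (.var x) (.var x) (.rr x))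
    (dc : ∀ h es ts, (hs : IsSymb h) → (hp : IsPPat (applyList h ts)) →
      (hd : List.Forall₂ (Deriv P) es ts) →
      List.Forall₂ (fun a b => ∃ h, motive a b h) es ts →
      motive (applyList h es) (applyList h ts) (.dc hs hp hd))
    (opr : ∀ r, (hr : r ∈ P) → ∀ θ, (hθ : PSub θ) → ∀ es as t,
      (hd : List.Forall₂ (Deriv P) es (r.lhs.map (subst θ))) →
      List.Forall₂ (fun a b => ∃ h, motive a b h) es (r.lhs.map (subst θ)) →
      (d : Deriv P (applyList (subst θ r.rhs) as) t) →
      motive (applyList (subst θ r.rhs) as) t d →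
      motive (applyList (.fn r.fn) (es ++ as)) t (.opr hr hθ hd d))
    {e t : Exp σ} (h : Deriv P e t) : motive e t h := by
  obtain ⟨d⟩ := h
  induction d with
  | bot e => exact bot e
  | rr x => exact rr x
  | dc h es ts hs hlen hp ds ih =>
    exact dc h es ts hs hp (List.forall₂_iff_zip.2 ⟨hlen, fun h => ⟨ds _ h⟩⟩)
      (List.forall₂_iff_zip.2 ⟨hlen, fun h => ⟨⟨ds _ h⟩, ih _ h⟩⟩)
  | opr r hr θ hθ es as t hlen ds d ih ihd =>
    exact opr r hr θ hθ es as t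
      (List.forall₂_iff_zip.2 ⟨by simpa using hlen, fun h => ⟨ds _ h⟩⟩)
      (List.forall₂_iff_zip.2 ⟨by simpa using hlen, fun h => ⟨⟨ds _ h⟩, ih _ h⟩⟩) ⟨d⟩ ihd

/-- Inversion of a derivation whose left-hand side is given as a spine. -/
theorem Deriv.inv {h : Exp σ} (hh : Atom h) {es : List (Exp σ)} {t : Exp σ}
    (d : Deriv P (applyList h es) t) :
    t = .bot ∨ (∃ x, h = .var x ∧ es = [] ∧ t = .var x) ∨
    (∃ ts, IsSymb h ∧ t = applyList h ts ∧ List.Forall₂ (Deriv P) es ts) ∨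
    ∃ r ∈ P, ∃ θ es₁ as, h = .fn r.fn ∧ PSub θ ∧ es = es₁ ++ as ∧
      List.Forall₂ (Deriv P) es₁ (r.lhs.map (subst θ)) ∧
      Deriv P (applyList (subst θ r.rhs) as) t := by
  generalize hx : applyList h es = x at d
  induction d using Deriv.ind with
  | bot e => exact .inl rfl
  | rr x =>
    obtain ⟨rfl, rfl⟩ := applyList_inj (h' := .var x) (es' := []) hh trivial hx
    exact .inr (.inl ⟨x, rfl, rfl, rfl⟩)
  | dc h' es' ts hs hp hd _ =>
    obtain ⟨rfl, rfl⟩ := applyList_inj hh hs.atom hx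
    exact .inr (.inr (.inl ⟨ts, hs, rfl, hd⟩))
  | opr r hr θ hθ es' as t hd _ d _ =>
    obtain ⟨rfl, rfl⟩ := applyList_inj hh (h' := .fn r.fn) trivial hx
    exact .inr (.inr (.inr ⟨r, hr, θ, es', as, rfl, hθ, rfl, hd, d⟩))

theorem Deriv.isPPat {e t : Exp σ} (d : Deriv P e t) : IsPPat t := by
  induction d using Deriv.ind with
  | bot => exact .bot
  | rr x => exact .var x
  | dc _ _ _ _ hp _ _ => exact hp
  | opr _ _ _ _ _ _ _ _ _ _ ih => exact ih

theorem mem_den {e t : Exp σ} : t ∈ den P e ↔ Deriv P e t :=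
  ⟨fun h => h.2, fun h => ⟨h.isPPat, h⟩⟩

theorem forall₂_same_of {R : Exp σ → Exp σ → Prop} {l : List (Exp σ)} (h : ∀ t ∈ l, R t t) :
    List.Forall₂ R l l := List.forall₂_same.2 h

theorem forall₂_comp {R S T : Exp σ → Exp σ → Prop} (hc : ∀ a b c, R a b → S b c → T a c) :
    ∀ {l m n : List (Exp σ)}, List.Forall₂ R l m → List.Forall₂ S m n → List.Forall₂ T l n
  | _, _, _, .nil, .nil => .nil
  | _, _, _, .cons h t, .cons h' t' => .cons (hc _ _ _ h h') (forall₂_comp hc t t')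

theorem forall₂_concat_left {R : Exp σ → Exp σ → Prop} {l m : List (Exp σ)} {a : Exp σ}
    (h : List.Forall₂ R (l ++ [a]) m) :
    ∃ m' b, m = m' ++ [b] ∧ List.Forall₂ R l m' ∧ R a b := by
  induction l generalizing m with
  | nil =>
    cases h with
    | cons h t => cases t; exact ⟨[], _, rfl, .nil, h⟩
  | cons c l ih =>
    cases h with
    | cons h t =>
      obtain ⟨m', b, rfl, h1, h2⟩ := ih t
      exact ⟨_ :: m', b, rfl, .cons h h1, h2⟩

theorem forall₂_concat {R : Exp σ → Exp σ → Prop} {l m : List (Exp σ)} {a b : Exp σ}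
    (h : List.Forall₂ R l m) (hab : R a b) : List.Forall₂ R (l ++ [a]) (m ++ [b]) :=
  List.rel_append h (.cons hab .nil)

/-- Derivability between the values of two substitutions carries over to the instances of a
pattern.  When both are the identity, this is reflexivity on partial patterns. -/
theorem Deriv.subst_pat {θ θ' : ℕ → Exp σ} {p : Exp σ} (hp : IsPPat p)
    (hθ : ∀ x ∈ occVars p, Deriv P (θ x) (θ' x)) : Deriv P (subst θ p) (subst θ' p) := by
  have hp' : IsPPat (subst θ' p) := hp.subst fun x hx => (hθ x hx).isPPat
  induction hp using IsPPat.spine_ind with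
  | step h ts hh hl hts ih =>
    simp only [mem_occVars_applyList] at hθ
    cases h with
    | var x =>
      simp [okLen] at hl; subst hl
      exact hθ x (by simp [occVars])
    | app => exact hh.elim
    | _ =>
      rw [subst_applyList] at hp'
      rw [subst_applyList, subst_applyList]
      refine Deriv.dc (by trivial) hp' ?_
      rw [List.forall₂_map_left_iff, List.forall₂_map_right_iff]
      have h2 := ((isPPat_applyList (by trivial)).1 hp').2
      exact forall₂_same_of fun t ht => ih t ht
        (fun x hx => hθ x (.inr ⟨t, ht, hx⟩)) (h2 _ (List.mem_map_of_mem ht))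

theorem subst_var (e : Exp σ) : subst Exp.var e = e := by
  induction e <;> simp_all [subst]

theorem Deriv.refl {t : Exp σ} (ht : IsPPat t) : Deriv P t t := by
  have := Deriv.subst_pat (P := P) (θ := Exp.var) (θ' := Exp.var) ht fun x _ => .rr x
  rwa [subst_var] at this

/-! ### Compositionality of the denotation -/

theorem length_of_forall₂ {R : Exp σ → Exp σ → Prop} (hP : WFProg P) {r : Rule σ} (hr : r ∈ P)
    {θ : ℕ → Exp σ} {es : List (Exp σ)} (h : List.Forall₂ R es (r.lhs.map (subst θ))) :
    es.length = σ.arityF r.fn := by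
  have := h.length_eq
  rw [this, List.length_map, (hP r hr).1.1]

/-- A partial application that is a pattern is too short for rule (OR). -/
theorem not_opr_of_okLen {R : Exp σ → Exp σ → Prop} (hP : WFProg P) {r : Rule σ} (hr : r ∈ P)
    {θ : ℕ → Exp σ} {es as : List (Exp σ)} (h : List.Forall₂ R es (r.lhs.map (subst θ)))
    (hl : okLen (.fn r.fn : Exp σ) (es ++ as).length) : False := by
  have := length_of_forall₂ hP hr h
  simp [okLen] at hl
  omega

theorem Deriv.trans (hP : WFProg P) {e s t : Exp σ} (d : Deriv P e s) (d' : Deriv P s t) :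
    Deriv P e t := by
  induction d using Deriv.ind generalizing t with
  | bot e =>
    rcases Deriv.inv (h := .bot) (es := []) trivial d' with rfl | ⟨_, h, _⟩ | ⟨ts, _, rfl, h⟩ |
      ⟨_, _, _, _, _, h, _⟩
    · exact .bot _
    · cases h
    · cases h; exact .bot _
    · cases h
  | rr x => exact d'
  | dc h es ts hs hp hd ih =>
    rcases Deriv.inv hs.atom d' with rfl | ⟨_, rfl, _⟩ | ⟨us, _, rfl, h⟩ |
      ⟨r, hr, θ, es₁, as, rfl, hθ, rfl, h, _⟩
    · exact .bot _
    · exact hs.elim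
    · exact .dc hs d'.isPPat (forall₂_comp (fun _ _ _ ⟨_, f⟩ g => f g) ih h)
    · exact (not_opr_of_okLen hP hr h ((isPPat_applyList (by trivial)).1 hp).1).elim
  | opr r hr θ hθ es as s hd _ d ih => exact .opr hr hθ hd (ih d')

/-- The denotation of an application factors through the denotation of its operator. -/
theorem Deriv.app_split (hP : WFProg P) {e d t : Exp σ} (h : Deriv P (.app e d) t) :
    ∃ s, Deriv P e s ∧ Deriv P (.app s d) t := by
  generalize hx : Exp.app e d = x at h
  induction h using Deriv.ind generalizing e with
  | bot => exact ⟨.bot, .bot _, .bot _⟩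
  | rr => cases hx
  | dc h es ts hs hp hd _ =>
    obtain ⟨es', rfl, rfl⟩ := spine_eq_app hs.atom hx.symm
    obtain ⟨ts', b, rfl, h1, h2⟩ := forall₂_concat_left hd
    have hp2 := (isPPat_applyList hs.atom).1 hp
    have hp' : IsPPat (applyList h ts') := isPPat_of (hp2.1.mono (by simp))
      fun t ht => hp2.2 t (by simp [ht])
    refine ⟨applyList h ts', .dc hs hp' h1, ?_⟩
    rw [← applyList_concat]
    exact .dc hs hp (forall₂_concat (forall₂_same_of fun t ht => .refl (hp2.2 t (by simp [ht]))) h2)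
  | opr r hr θ hθ es as t hd _ h ih =>
    obtain ⟨l, hl, rfl⟩ := spine_eq_app (h := .fn r.fn) trivial hx.symm
    rcases List.eq_nil_or_concat' as with rfl | ⟨as', a, rfl⟩
    · simp only [List.append_nil] at hl
      subst hl
      obtain ⟨ms, m, hm, h1, h2⟩ := forall₂_concat_left hd
      have hpat : ∀ u ∈ ms, IsPPat u := by
        intro u hu
        have : u ∈ r.lhs.map (subst θ) := by simp [hm, hu]
        obtain ⟨p, hp, rfl⟩ := List.mem_map.1 this
        exact ((hP r hr).1.2.1 p hp).1.subst fun x _ => hθ x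
      have hlen := length_of_forall₂ hP hr hd
      simp [h1.length_eq] at hlen
      refine ⟨applyList (.fn r.fn) ms, .dc trivial (isPPat_of ?_ hpat) h1, ?_⟩
      · simp [okLen]; omega
      · have := Deriv.opr (as := []) hr hθ (es := ms ++ [d]) (by
          rw [hm]
          exact forall₂_concat (forall₂_same_of fun t ht => .refl (hpat t ht)) h2) h
        simpa using this
    · rw [← List.append_assoc] at hl
      obtain ⟨rfl, h'⟩ := List.append_inj' hl rfl
      simp only [List.cons.injEq, and_true] at h'
      subst h'
      obtain ⟨s, h1, h2⟩ := ih (applyList_concat _ _ _).symm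
      exact ⟨s, .opr hr hθ hd h1, h2⟩

theorem Deriv.app_join (hP : WFProg P) {e s d t : Exp σ} (h : Deriv P e s)
    (h' : Deriv P (.app s d) t) : Deriv P (.app e d) t := by
  induction h using Deriv.ind generalizing t with
  | bot e =>
    rcases Deriv.inv (h := .bot) (es := [d]) trivial h' with rfl | ⟨_, h, _⟩ | ⟨ts, _, rfl, h⟩ |
      ⟨_, _, _, _, _, h, _⟩
    · exact .bot _
    · cases h
    · have := ((isPPat_applyList (by trivial)).1 h'.isPPat).1
      rw [← h.length_eq] at this
      cases this
    · cases h
  | rr => exact h'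
  | dc h es ts hs hp hd _ =>
    rw [← applyList_concat] at h' ⊢
    have hp2 := (isPPat_applyList hs.atom).1 hp
    have hc : ∀ a b c, Deriv P a b → Deriv P b c → Deriv P a c := fun _ _ _ f g => f.trans hP g
    rcases Deriv.inv hs.atom h' with rfl | ⟨_, rfl, _⟩ | ⟨us, _, rfl, h⟩ |
      ⟨r, hr, θ, es₁, as, rfl, hθ, hl, h, h2⟩
    · exact .bot _
    · exact hs.elim
    · obtain ⟨us', u, rfl, h1, h2⟩ := forall₂_concat_left h
      exact .dc hs h'.isPPat (forall₂_concat (forall₂_comp hc hd h1) h2)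
    · rcases List.eq_nil_or_concat' as with rfl | ⟨as', a, rfl⟩
      · simp only [List.append_nil] at hl
        subst hl
        obtain ⟨us', u, hu, h3, h4⟩ := forall₂_concat_left h
        have := Deriv.opr (as := []) hr hθ (es := es ++ [d]) (by
          rw [hu]
          exact forall₂_concat (forall₂_comp hc hd h3) h4) h2
        simpa using this
      · rw [← List.append_assoc] at hl
        obtain ⟨rfl, _⟩ := List.append_inj' hl rfl
        exact (not_opr_of_okLen hP hr h hp2.1).elim
  | opr r hr θ hθ es as s hd _ _ ih =>
    have := ih h'
    rw [← applyList_concat] at this ⊢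
    rw [List.append_assoc]
    exact .opr hr hθ hd this

theorem Deriv.app_mono_right {d e e' t : Exp σ} (he : ∀ s, Deriv P e s → Deriv P e' s)
    (h : Deriv P (.app d e) t) : Deriv P (.app d e') t := by
  generalize hx : Exp.app d e = x at h
  induction h using Deriv.ind generalizing d with
  | bot => exact .bot _
  | rr => cases hx
  | dc h es ts hs hp hd _ =>
    obtain ⟨es', rfl, rfl⟩ := spine_eq_app hs.atom hx.symm
    obtain ⟨ts', b, rfl, h1, h2⟩ := forall₂_concat_left hd
    rw [← applyList_concat]
    exact .dc hs hp (forall₂_concat h1 (he _ h2))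
  | opr r hr θ hθ es as t hd _ h ih =>
    obtain ⟨l, hl, rfl⟩ := spine_eq_app (h := .fn r.fn) trivial hx.symm
    rcases List.eq_nil_or_concat' as with rfl | ⟨as', a, rfl⟩
    · simp only [List.append_nil] at hl
      subst hl
      obtain ⟨ms, m, hm, h1, h2⟩ := forall₂_concat_left hd
      have := Deriv.opr (as := []) hr hθ (es := l ++ [e']) (by
          rw [hm]
          exact forall₂_concat h1 (he _ h2)) h
      simpa using this
    · rw [← List.append_assoc] at hl
      obtain ⟨rfl, h'⟩ := List.append_inj' hl rfl
      simp only [List.cons.injEq, and_true] at h'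
      subst h'
      have := ih (applyList_concat _ _ _).symm
      rw [← applyList_concat] at this ⊢
      rw [List.append_assoc]
      exact .opr hr hθ hd this

theorem Deriv.fill_mono (hP : WFProg P) {e e' : Exp σ} (he : ∀ s, Deriv P e s → Deriv P e' s)
    (C : Cntxt σ) {t : Exp σ} (h : Deriv P (C.fill e) t) : Deriv P (C.fill e') t := by
  induction C generalizing t with
  | hole => exact he _ h
  | appL C d ih =>
    obtain ⟨s, h1, h2⟩ := Deriv.app_split hP h
    exact Deriv.app_join hP (ih h1) h2
  | appR d C ih => exact Deriv.app_mono_right (fun s hs => ih hs) h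

/-! ### Signature extensions and conservativity -/

section Ext

variable {τ : Sig} (ι : SigHom σ τ)

theorem mapExp_inj {a b : Exp σ} (h : ι.mapExp a = ι.mapExp b) : a = b := by
  induction a generalizing b with
  | app x y ihx ihy =>
    cases b <;> simp [SigHom.mapExp] at h ⊢
    exact ⟨ihx h.1, ihy h.2⟩
  | fn f => cases b <;> simp [SigHom.mapExp] at h ⊢; exact ι.injF h
  | cn f => cases b <;> simp [SigHom.mapExp] at h ⊢; exact ι.injC h
  | _ => cases b <;> simp_all [SigHom.mapExp]

@[simp] theorem atom_mapExp {h : Exp σ} : Atom (ι.mapExp h) ↔ Atom h := by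
  cases h <;> simp [SigHom.mapExp, Atom]

@[simp] theorem isSymb_mapExp {h : Exp σ} : IsSymb (ι.mapExp h) ↔ IsSymb h := by
  cases h <;> simp [SigHom.mapExp, IsSymb]

@[simp] theorem okLen_mapExp {h : Exp σ} {n : ℕ} : okLen (ι.mapExp h) n ↔ okLen h n := by
  cases h <;> simp [SigHom.mapExp, okLen, ι.arF, ι.arC]

@[simp] theorem occVars_mapExp {e : Exp σ} : occVars (ι.mapExp e) = occVars e := by
  induction e <;> simp_all [SigHom.mapExp, occVars]

@[simp] theorem botFree_mapExp {e : Exp σ} : BotFree (ι.mapExp e) ↔ BotFree e := by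
  induction e <;> simp_all [SigHom.mapExp, BotFree]

theorem subst_mapExp (θ : ℕ → Exp σ) (e : Exp σ) :
    ι.mapExp (subst θ e) = subst (fun x => ι.mapExp (θ x)) (ι.mapExp e) := by
  induction e <;> simp_all [SigHom.mapExp, subst]

/-- Decomposition of an embedded expression along a spine of the larger signature. -/
theorem mapExp_spine {a : Exp σ} {h : Exp τ} (hh : Atom h) {es : List (Exp τ)}
    (he : ι.mapExp a = applyList h es) :
    ∃ h' es', Atom h' ∧ a = applyList h' es' ∧ h = ι.mapExp h' ∧ es = es'.map ι.mapExp := by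
  obtain ⟨h', es', hh', rfl⟩ := exists_spine a
  rw [mapExp_applyList] at he
  obtain ⟨rfl, rfl⟩ := applyList_inj (by simpa using hh') hh he
  exact ⟨h', es', hh', rfl, rfl, rfl⟩

theorem isPPat_mapExp {t : Exp σ} : IsPPat (ι.mapExp t) ↔ IsPPat t := by
  constructor
  · intro h
    generalize hx : ι.mapExp t = x at h
    induction h using IsPPat.spine_ind generalizing t with
    | step h ts hh hl hts ih =>
      obtain ⟨h', ts', hh', rfl, rfl, rfl⟩ := mapExp_spine ι hh hx
      exact isPPat_of (by simpa using hl) fun t ht => ih _ (List.mem_map_of_mem ht) rfl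
  · intro h
    induction h using IsPPat.spine_ind with
    | step h ts hh hl hts ih =>
      rw [mapExp_applyList]
      refine isPPat_of (by simpa using hl) ?_
      simp only [List.mem_map, forall_exists_index, and_imp]
      rintro _ t ht rfl
      exact ih t ht

theorem wf_mapRule {r : Rule σ} (h : r.WF ∧ r.NoExtra) :
    (ι.mapRule r).WF ∧ (ι.mapRule r).NoExtra := by
  have hocc : (ι.mapRule r).lhs.flatMap occVars = r.lhs.flatMap occVars := by
    simp [SigHom.mapRule, List.flatMap_map]
  refine ⟨⟨?_, ?_, ?_⟩, ?_⟩
  · simp [SigHom.mapRule, ι.arF, h.1.1]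
  · simp only [SigHom.mapRule, List.mem_map, forall_exists_index, and_imp]
    rintro _ t ht rfl
    exact ⟨(isPPat_mapExp ι).2 (h.1.2.1 t ht).1, (botFree_mapExp ι).2 (h.1.2.1 t ht).2⟩
  · rw [hocc]; exact h.1.2.2
  · intro x hx
    rw [hocc]
    exact h.2 x (by simpa [SigHom.mapRule] using hx)

theorem Deriv.map {P' : Program τ} (hsub : ι.mapProg P ⊆ P') {e t : Exp σ} (d : Deriv P e t) :
    Deriv P' (ι.mapExp e) (ι.mapExp t) := by
  induction d using Deriv.ind with
  | bot => exact .bot _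
  | rr x => exact .rr x
  | dc h es ts hs hp _ ih =>
    replace ih := ih.imp fun _ _ ⟨_, h⟩ => h
    have hp' := (isPPat_mapExp ι).2 hp
    rw [mapExp_applyList] at hp'
    rw [mapExp_applyList, mapExp_applyList]
    refine .dc ((isSymb_mapExp ι).2 hs) hp' ?_
    rwa [List.forall₂_map_left_iff, List.forall₂_map_right_iff]
  | opr r hr θ hθ es as t _ ih _ ihd =>
    replace ih := ih.imp fun _ _ ⟨_, h⟩ => h
    rw [mapExp_applyList, List.map_append]
    refine Deriv.opr (r := ι.mapRule r) (hsub ⟨r, hr, rfl⟩)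
      (θ := fun x => ι.mapExp (θ x)) (fun x => (isPPat_mapExp ι).2 (hθ x)) ?_ ?_
    · simp only [SigHom.mapRule, List.map_map, Function.comp_def, List.forall₂_map_left_iff,
        List.forall₂_map_right_iff, ← subst_mapExp] at ih ⊢
      exact ih
    · rwa [mapExp_applyList, subst_mapExp] at ihd

/-- If an instance of an embedded expression is itself embedded, so are the substituted values. -/
theorem subst_mem_range {θ : ℕ → Exp τ} {p s : Exp σ} (h : subst θ (ι.mapExp p) = ι.mapExp s)
    {x : ℕ} (hx : x ∈ occVars p) :
    ∃ u, θ x = ι.mapExp u ∧ expFS (ι.mapExp u) ⊆ expFS (ι.mapExp s) := by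
  induction p generalizing s with
  | var y =>
    simp [occVars] at hx; subst hx
    exact ⟨s, h, subset_rfl⟩
  | app a b iha ihb =>
    cases s <;> simp [SigHom.mapExp, subst] at h
    rcases List.mem_append.1 hx with hx | hx
    · obtain ⟨u, h1, h2⟩ := iha h.1 hx
      exact ⟨u, h1, h2.trans Set.subset_union_left⟩
    · obtain ⟨u, h1, h2⟩ := ihb h.2 hx
      exact ⟨u, h1, h2.trans Set.subset_union_right⟩
  | _ => simp [occVars] at hx

theorem expFS_subst {θ : ℕ → Exp σ} {e : Exp σ} {A : Set σ.FS} (he : expFS e ⊆ A)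
    (hθ : ∀ x ∈ occVars e, expFS (θ x) ⊆ A) : expFS (subst θ e) ⊆ A := by
  induction e with
  | var x => exact hθ x (by simp [occVars])
  | app a b iha ihb =>
    simp only [expFS, Set.union_subset_iff] at he
    simp only [occVars, List.mem_append] at hθ
    exact Set.union_subset (iha he.1 fun x hx => hθ x (.inl hx))
      (ihb he.2 fun x hx => hθ x (.inr hx))
  | _ => simpa [subst] using he

/-- Conservativity: evaluating an embedded expression whose function symbols lie in a set `A`
which contains those of `P` and is disjoint from the newly defined ones never leaves the embedded
signature.  The absence of extra variables is what keeps the substitutions used by (OR) inside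
that signature. -/
theorem Deriv.conservative (hP : WFProg P) {P'' : Program τ} {A : Set τ.FS}
    (hA : progFS (ι.mapProg P) ⊆ A) (hdisj : Disjoint (defs P'') A) {a : Exp σ} {t : Exp τ}
    (ha : expFS (ι.mapExp a) ⊆ A) (d : Deriv (ι.mapProg P ∪ P'') (ι.mapExp a) t) :
    ∃ s, t = ι.mapExp s ∧ expFS (ι.mapExp s) ⊆ A ∧ Deriv P a s := by
  generalize hx : ι.mapExp a = x at d
  induction d using Deriv.ind generalizing a with
  | bot => exact ⟨.bot, rfl, by simp [SigHom.mapExp, expFS], .bot _⟩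
  | rr x =>
    cases a <;> simp [SigHom.mapExp] at hx
    subst hx
    exact ⟨.var _, rfl, by simp [SigHom.mapExp, expFS], .rr _⟩
  | dc h es ts hs hp hd ih =>
    replace ih := ih.imp fun _ _ ⟨_, h⟩ => @h
    obtain ⟨h', es', hh', rfl, rfl, rfl⟩ := mapExp_spine ι hs.atom hx
    rw [mapExp_applyList] at ha
    have key : ∃ ss, ts = ss.map ι.mapExp ∧ (∀ s ∈ ss, expFS (ι.mapExp s) ⊆ A) ∧
        List.Forall₂ (Deriv P) es' ss := by
      have ha' : ∀ e ∈ es', expFS (ι.mapExp e) ⊆ A := fun e he f hf =>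
        ha (mem_expFS_applyList.2 (.inr ⟨_, List.mem_map_of_mem he, hf⟩))
      clear ha hx hp hd
      rw [List.forall₂_map_left_iff] at ih
      induction ih with
      | nil => exact ⟨[], rfl, by simp, .nil⟩
      | @cons e t es ts h _ ih =>
        obtain ⟨s, rfl, h1, h2⟩ := h (ha' e (by simp)) rfl
        obtain ⟨ss, rfl, h3, h4⟩ := ih fun e he => ha' e (by simp [he])
        exact ⟨s :: ss, rfl, by simpa using ⟨h1, h3⟩, .cons h2 h4⟩
    obtain ⟨ss, rfl, h1, h2⟩ := key
    rw [← mapExp_applyList] at hp ⊢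
    refine ⟨_, rfl, ?_, .dc ((isSymb_mapExp ι).1 hs) ((isPPat_mapExp ι).1 hp) h2⟩
    intro f hf
    rw [mapExp_applyList, mem_expFS_applyList] at hf
    rcases hf with hf | ⟨t, ht, hf⟩
    · exact ha (mem_expFS_applyList.2 (.inl hf))
    · obtain ⟨s, hs, rfl⟩ := List.mem_map.1 ht
      exact h1 s hs hf
  | opr r hr θ hθ es as t hd ih _ ihd =>
    replace ih := ih.imp fun _ _ ⟨_, h⟩ => @h
    obtain ⟨h', es', hh', rfl, hh, hes⟩ := mapExp_spine ι (h := .fn r.fn) trivial hx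
    rw [mapExp_applyList, ← hh, ← hes] at ha
    have hrA : r.fn ∈ A := ha (mem_expFS_applyList.2 (.inl rfl))
    rcases hr with ⟨r₀, hr₀, rfl⟩ | hr
    swap
    · exact (Set.disjoint_left.1 hdisj ⟨r, hr, rfl⟩ hrA).elim
    obtain ⟨es₁, as₁, rfl, rfl, rfl⟩ := List.append_eq_map_iff.1 hes
    obtain rfl : h' = .fn r₀.fn := mapExp_inj ι (by rw [← hh]; rfl)
    have haes : ∀ e ∈ es₁ ++ as₁, expFS (ι.mapExp e) ⊆ A := fun e he f hf =>
      ha (mem_expFS_applyList.2 (.inr ⟨ι.mapExp e, by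
        rw [← List.map_append]; exact List.mem_map_of_mem he, hf⟩))
    -- Each instantiated parameter is embedded, hence so is each value of `θ` that matters.
    have hval : List.Forall₂ (fun e p => ∃ s, subst θ (ι.mapExp p) = ι.mapExp s ∧
        expFS (ι.mapExp s) ⊆ A ∧ Deriv P e s) es₁ r₀.lhs := by
      simp only [SigHom.mapRule, List.map_map, List.forall₂_map_left_iff,
        List.forall₂_map_right_iff] at ih
      rw [List.forall₂_iff_zip] at ih ⊢
      exact ⟨ih.1, fun {e p} hep => ih.2 hep
        (haes e (List.mem_append_left _ (List.of_mem_zip hep).1)) rfl⟩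
    have hrange : ∀ x, ∃ u : Exp σ, IsPPat u ∧ (x ∈ r₀.lhs.flatMap occVars →
        θ x = ι.mapExp u ∧ expFS (ι.mapExp u) ⊆ A) := by
      intro x
      by_cases hx : x ∈ r₀.lhs.flatMap occVars
      · obtain ⟨p, hp, hxp⟩ := List.mem_flatMap.1 hx
        have : ∃ s, subst θ (ι.mapExp p) = ι.mapExp s ∧ expFS (ι.mapExp s) ⊆ A := by
          clear * - hval hp
          generalize r₀.lhs = ps at hval hp
          induction hval with
          | nil => simp at hp
          | cons h _ ih =>
            rcases List.mem_cons.1 hp with rfl | hp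
            · exact h.imp fun _ h => ⟨h.1, h.2.1⟩
            · exact ih hp
        obtain ⟨s, h1, h2⟩ := this
        obtain ⟨u, h3, h4⟩ := subst_mem_range ι h1 hxp
        exact ⟨u, (isPPat_mapExp ι).1 (h3 ▸ hθ x), fun _ => ⟨h3, h4.trans h2⟩⟩
      · exact ⟨.bot, .bot, fun h => (hx h).elim⟩
    choose θ₀ hθ₀ hθ₁ using hrange
    have hback : ∀ e : Exp σ, (∀ x ∈ occVars e, x ∈ r₀.lhs.flatMap occVars) →
        subst θ (ι.mapExp e) = ι.mapExp (subst θ₀ e) := by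
      intro e he
      rw [subst_mapExp]
      exact subst_congr fun x hx => (hθ₁ x (he x (by simpa using hx))).1
    have hrhs := hback r₀.rhs (hP r₀ hr₀).2
    have hrhsA : expFS (ι.mapExp (subst θ₀ r₀.rhs)) ⊆ A := by
      rw [← hrhs]
      refine expFS_subst (fun f hf => hA ?_) fun x hx => ?_
      · exact Set.mem_biUnion (Set.mem_image_of_mem _ hr₀) (.inr (.inr hf))
      · have := hθ₁ x ((hP r₀ hr₀).2 x (by simpa using hx))
        rw [this.1]; exact this.2
    obtain ⟨s, rfl, h1, h2⟩ := ihd (a := applyList (subst θ₀ r₀.rhs) as₁) (by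
        intro f hf
        rw [mapExp_applyList, mem_expFS_applyList] at hf
        rcases hf with hf | ⟨t, ht, hf⟩
        · exact hrhsA hf
        · obtain ⟨s, hs, rfl⟩ := List.mem_map.1 ht
          exact haes s (List.mem_append_right _ hs) hf)
      (by rw [mapExp_applyList, ← hrhs]; rfl)
    refine ⟨s, rfl, h1, .opr hr₀ hθ₀ ?_ h2⟩
    rw [List.forall₂_map_right_iff, List.forall₂_iff_zip]
    rw [List.forall₂_iff_zip] at hval
    refine ⟨hval.1, fun {e p} hep => ?_⟩
    obtain ⟨s, h3, _, h4⟩ := hval.2 hep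
    rw [hback p fun x hx => List.mem_flatMap.2 ⟨p, (List.of_mem_zip hep).2, hx⟩] at h3
    rwa [mapExp_inj ι h3]

end Ext

/-! ### Linearised patterns -/

/-- Renaming of variables. -/
def ren (f : ℕ → ℕ) : Exp σ → Exp σ := subst fun x => .var (f x)

/-- The linearisation of `t`: every occurrence of a variable or of `⊥` is replaced by a variable
of its own.  The two sides of an application are kept apart by using even and odd indices. -/
def lin : Exp σ → Exp σ
  | .var _ => .var 0
  | .bot => .var 0
  | .fn f => .fn f
  | .cn c => .cn c
  | .app a b => .app (ren (fun n => 2 * n) (lin a)) (ren (fun n => 2 * n + 1) (lin b))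

/-- The substitution that recovers `t` from `lin t`. -/
def val : Exp σ → ℕ → Exp σ
  | .var x, _ => .var x
  | .app a b, n => if n % 2 = 0 then val a (n / 2) else val b (n / 2)
  | _, _ => .bot

theorem occVars_ren (f : ℕ → ℕ) (e : Exp σ) : occVars (ren f e) = (occVars e).map f := by
  induction e <;> simp_all [ren, subst, occVars]

theorem subst_ren (f : ℕ → ℕ) (θ : ℕ → Exp σ) (e : Exp σ) :
    subst θ (ren f e) = subst (fun x => θ (f x)) e := by
  induction e <;> simp_all [ren, subst]

theorem botFree_ren (f : ℕ → ℕ) (e : Exp σ) : BotFree (ren f e) ↔ BotFree e := by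
  induction e <;> simp_all [ren, subst, BotFree]

theorem botFree_lin (t : Exp σ) : BotFree (lin t) := by
  induction t <;> simp_all [lin, BotFree, botFree_ren]

theorem nodup_lin (t : Exp σ) : (occVars (lin t)).Nodup := by
  induction t with
  | app a b iha ihb =>
    simp only [lin, occVars, occVars_ren]
    refine List.Nodup.append (iha.map fun x y h => ?_) (ihb.map fun x y h => ?_) ?_
    · omega
    · omega
    · intro x h1 h2
      obtain ⟨y, _, rfl⟩ := List.mem_map.1 h1
      obtain ⟨z, _, h⟩ := List.mem_map.1 h2
      omega
  | _ => simp [lin, occVars]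

theorem subst_val_lin (t : Exp σ) : subst (val t) (lin t) = t := by
  induction t with
  | app a b iha ihb =>
    simp only [lin, subst, subst_ren]
    have h1 : (fun x => val (a.app b) (2 * x)) = val a := by
      funext x; simp [val]
    have h2 : (fun x => val (a.app b) (2 * x + 1)) = val b := by
      funext x
      have : (2 * x + 1) / 2 = x := by omega
      simp [val, Nat.add_mod, this]
    rw [h1, h2, iha, ihb]
  | _ => rfl

theorem val_cases (t : Exp σ) (n : ℕ) : val t n = .bot ∨ ∃ x, val t n = .var x := by
  induction t generalizing n with
  | app a b iha ihb =>
    simp only [val]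
    split
    · exact iha _
    · exact ihb _
  | _ => simp [val]

theorem isPPat_ren {f : ℕ → ℕ} {e : Exp σ} (h : IsPPat e) : IsPPat (ren f e) :=
  h.subst fun _ _ => .var _

theorem lin_applyList {h : Exp σ} (hh : IsSymb h) (hb : h ≠ .bot) (ts : List (Exp σ))
    (hts : ∀ t ∈ ts, IsPPat (lin t)) :
    ∃ us, lin (applyList h ts) = applyList h us ∧ us.length = ts.length ∧ ∀ u ∈ us, IsPPat u := by
  induction ts using List.reverseRecOn with
  | nil => exact ⟨[], by cases h <;> first | rfl | exact hh.elim | exact (hb rfl).elim, rfl, by simp⟩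
  | append_singleton l a ih =>
    obtain ⟨us, h1, h2, h3⟩ := ih fun t ht => hts t (by simp [ht])
    refine ⟨us.map (ren fun n => 2 * n) ++ [ren (fun n => 2 * n + 1) (lin a)], ?_, ?_, ?_⟩
    · have : ren (fun n => 2 * n) h = h := by
        cases h <;> first | rfl | exact hh.elim
      simp only [applyList_concat, lin, h1]
      rw [ren, subst_applyList]
      change Exp.app (applyList (ren _ h) _) _ = _
      rw [this]
    · simp [h2]
    · intro u hu
      rcases List.mem_append.1 hu with hu | hu
      · obtain ⟨v, hv, rfl⟩ := List.mem_map.1 hu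
        exact isPPat_ren (h3 v hv)
      · rw [List.mem_singleton.1 hu]
        exact isPPat_ren (hts a (by simp))

theorem isPPat_lin {t : Exp σ} (ht : IsPPat t) : IsPPat (lin t) := by
  induction ht using IsPPat.spine_ind with
  | step h ts hh hl hts ih =>
    cases h with
    | var x => simp [okLen] at hl; subst hl; exact .var _
    | bot => simp [okLen] at hl; subst hl; exact .var _
    | app => exact hh.elim
    | fn c =>
      obtain ⟨us, h1, h2, h3⟩ := lin_applyList (h := .fn c) trivial (by simp) ts ih
      rw [h1]
      exact isPPat_of (h2 ▸ hl) h3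
    | cn c =>
      obtain ⟨us, h1, h2, h3⟩ := lin_applyList (h := .cn c) trivial (by simp) ts ih
      rw [h1]
      exact isPPat_of (h2 ▸ hl) h3

/-- The variables of `lin t` that stand for variable occurrences of `t`, not for `⊥`. -/
def varPos (t : Exp σ) : List ℕ :=
  (occVars (lin t)).filter fun n => match val t n with
    | .var _ => true
    | _ => false

theorem exists_val_of_mem {t : Exp σ} {n : ℕ} (hn : n ∈ varPos t) : ∃ x, val t n = .var x := by
  rcases val_cases t n with h | h
  · simp [varPos, h] at hn
  · exact h

theorem val_eq_bot_of_notMem {t : Exp σ} {n : ℕ} (hn : n ∈ occVars (lin t))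
    (hn' : n ∉ varPos t) : val t n = .bot := by
  rcases val_cases t n with h | ⟨x, h⟩
  · exact h
  · simp [varPos, h, hn] at hn'

/-! ### The distinguishing program -/

/-- The signature `σ` with a new unary function symbol and a new constructor of arity `k`
(both are `none`). -/
def extSig (σ : Sig) (k : ℕ) : Sig where
  FS := Option σ.FS
  CS := Option σ.CS
  arityF := fun f => f.elim 1 σ.arityF
  arityC := fun c => c.elim k σ.arityC

/-- The inclusion of `σ` into its extension. -/
def extHom (σ : Sig) (k : ℕ) : SigHom σ (extSig σ k) where
  onF := some
  onC := some
  injF := Option.some_injective _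
  injC := Option.some_injective _
  arF := fun _ => rfl
  arC := fun _ => rfl

/-- The signature in which `t` is tested: the new constructor collects the variables of `t`. -/
abbrev testSig (t : Exp σ) : Sig := extSig σ (varPos t).length

/-- The embedding of `σ` into the signature testing `t`. -/
abbrev testHom (t : Exp σ) : SigHom σ (testSig t) := extHom σ (varPos t).length

/-- The new function symbol `g`. -/
abbrev gSym (t : Exp σ) : (testSig t).FS := (none : Option σ.FS)

/-- The new constructor `T`. -/
abbrev tSym (t : Exp σ) : (testSig t).CS := (none : Option σ.CS)

/-- The rule `g (lin t) → T y₁ … yₖ`, where the `yᵢ` are the variables of `lin t` standing for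
variable occurrences of `t`. -/
def testRule (t : Exp σ) : Rule (testSig t) where
  fn := gSym t
  lhs := [(testHom t).mapExp (lin t)]
  rhs := applyList (.cn (tSym t)) ((varPos t).map .var)

/-- The first-order pattern `T X₁ … Xₖ`, where the `Xᵢ` are the variable occurrences of `t`. -/
def testVal (t : Exp σ) : Exp (testSig t) :=
  applyList (.cn (tSym t)) ((varPos t).map fun n => (testHom t).mapExp (val t n))

/-- The program `P` together with the test for `t`. -/
def testProg (P : Program σ) (t : Exp σ) : Program (testSig t) :=
  (testHom t).mapProg P ∪ {testRule t}

theorem isFOPat_testVal (t : Exp σ) : IsFOPat (testVal t) := by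
  refine .capp _ _ (by simp [testSig, extSig]) ?_
  simp only [List.mem_map, forall_exists_index, and_imp]
  rintro _ n hn rfl
  obtain ⟨x, hx⟩ := exists_val_of_mem hn
  rw [hx]
  exact .var x

theorem isPPat_val (t : Exp σ) (n : ℕ) : IsPPat (val t n) := by
  rcases val_cases t n with h | ⟨x, h⟩ <;> rw [h]
  · exact .bot
  · exact .var x

theorem isPPat_testVal (t : Exp σ) : IsPPat (testVal t) := by
  refine .capp _ _ (by simp [testSig, extSig]) ?_
  simp only [List.mem_map, forall_exists_index, and_imp]
  rintro _ n _ rfl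
  exact (isPPat_mapExp _).2 (isPPat_val t n)

theorem subst_testRule_rhs (t : Exp σ) (θ : ℕ → Exp (testSig t)) :
    subst θ (testRule t).rhs = applyList (.cn (tSym t)) ((varPos t).map θ) := by
  simp [testRule, subst, Function.comp_def]

theorem wfProg_testProg (hP : WFProg P) {t : Exp σ} (ht : IsPPat t) :
    WFProg (testProg P t) := by
  rintro r (⟨r, hr, rfl⟩ | rfl)
  · exact wf_mapRule _ (hP r hr)
  · refine ⟨⟨rfl, ?_, ?_⟩, ?_⟩
    · simp only [testRule, List.mem_singleton]
      rintro _ rfl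
      exact ⟨(isPPat_mapExp _).2 (isPPat_lin ht), (botFree_mapExp _).2 (botFree_lin t)⟩
    · simpa [testRule] using nodup_lin t
    · intro x hx
      simp only [testRule, mem_occVars_applyList, List.mem_map] at hx
      rcases hx with hx | ⟨_, ⟨n, hn, rfl⟩, hx⟩
      · simp [occVars] at hx
      · simp only [occVars, List.mem_singleton] at hx
        subst hx
        simpa [testRule] using List.mem_of_mem_filter hn

theorem gSym_notMem_expFS {t : Exp σ} (a : Exp σ) :
    gSym t ∉ expFS ((testHom t).mapExp a) := by
  induction a with
  | app a b iha ihb => exact fun h => h.elim iha ihb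
  | fn f => exact fun h => by cases h
  | _ => exact fun h => h

theorem gSym_notMem_progFS {t : Exp σ} : gSym t ∉ progFS ((testHom t).mapProg P) := by
  intro h
  simp only [progFS, Set.mem_iUnion] at h
  obtain ⟨_, ⟨r, _, rfl⟩, h⟩ := h
  rcases h with h | h | h
  · cases h
  · simp only [SigHom.mapRule, Set.mem_iUnion] at h
    obtain ⟨_, hu, h⟩ := h
    obtain ⟨u, _, rfl⟩ := List.mem_map.1 hu
    exact gSym_notMem_expFS u h
  · exact gSym_notMem_expFS r.rhs h

theorem disjoint_testRule (t a : Exp σ) : Disjoint (defs {testRule t})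
    (expFS ((testHom t).mapExp a) ∪ progFS ((testHom t).mapProg P)) := by
  simp only [defs, Set.image_singleton, Set.disjoint_singleton_left]
  exact fun h => h.elim (gSym_notMem_expFS a) gSym_notMem_progFS

theorem safeExt_testProg (t a : Exp σ) :
    SafeExt ((testHom t).mapProg P) (testProg P t) ((testHom t).mapExp a) := by
  refine ⟨{testRule t}, rfl, ?_, disjoint_testRule t a⟩
  rw [Set.disjoint_singleton_right]
  rintro ⟨r, _, h⟩
  have : (some r.fn : Option σ.FS) = none := congrArg Rule.fn h
  cases this

/-- The test recognises `t`: `g a` has the value `T X₁ … Xₖ` exactly when `a` has the value `t`.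
For the direction from left to right, (OR) is used with some `θ` such that `a ⇒ (lin t)θ`, and the
result forces `θ` to be above `val t`, so that `a ⇒ t` by transitivity. -/
theorem deriv_testVal_iff (hP : WFProg P) {t : Exp σ} (ht : IsPPat t) (a : Exp σ) :
    Deriv (testProg P t) (.app (.fn (gSym t)) ((testHom t).mapExp a)) (testVal t) ↔
      Deriv P a t := by
  have hP' := wfProg_testProg hP ht
  have hval : subst (fun n => (testHom t).mapExp (val t n)) ((testHom t).mapExp (lin t)) =
      (testHom t).mapExp t := by
    rw [← subst_mapExp, subst_val_lin]
  constructor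
  · intro d
    rcases Deriv.inv (h := .fn (gSym t)) (es := [(testHom t).mapExp a]) trivial d with
      h | ⟨_, h, _⟩ | ⟨ts, _, h, _⟩ | ⟨r, hr, θ, es, as, h, hθ, hes, hd, d'⟩
    · have := (applyList_inj (h := .cn (tSym t)) (h' := .bot) (es' := []) trivial trivial h).1
      cases this
    · cases h
    · have := (applyList_inj (h := .cn (tSym t)) (h' := .fn (gSym t)) trivial trivial h).1
      cases this
    rcases hr with ⟨r, hr, rfl⟩ | rfl
    · cases h
    have hd2 : List.Forall₂ (Deriv (testProg P t)) es
        [subst θ ((testHom t).mapExp (lin t))] := hd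
    obtain ⟨rfl, rfl⟩ : es = [(testHom t).mapExp a] ∧ as = [] := by
      cases hd2 with
      | cons _ h => cases h; simpa [eq_comm] using hes
    have h1 : Deriv (testProg P t) ((testHom t).mapExp a)
        (subst θ ((testHom t).mapExp (lin t))) := by
      cases hd2 with
      | cons h _ => exact h
    rw [applyList_nil, subst_testRule_rhs] at d'
    have h2 : ∀ n ∈ varPos t, Deriv (testProg P t) (θ n) ((testHom t).mapExp (val t n)) := by
      rcases Deriv.inv (h := .cn (tSym t)) trivial d' with
        h | ⟨_, h, _⟩ | ⟨ts, _, h, hd⟩ | ⟨r, hr, θ, es, as, h, _⟩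
      · have := (applyList_inj (h := .cn (tSym t)) (h' := .bot) (es' := []) trivial trivial h).1
        cases this
      · cases h
      · obtain ⟨_, rfl⟩ :=
          applyList_inj (h := .cn (tSym t)) (h' := .cn (tSym t)) trivial trivial h
        rw [List.forall₂_map_left_iff, List.forall₂_map_right_iff] at hd
        exact List.forall₂_same.1 hd
      · cases h
    have h3 : Deriv (testProg P t) (subst θ ((testHom t).mapExp (lin t)))
        ((testHom t).mapExp t) := by
      rw [← hval]
      refine .subst_pat ((isPPat_mapExp _).2 (isPPat_lin ht)) fun n hn => ?_
      by_cases hn' : n ∈ varPos t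
      · exact h2 n hn'
      · rw [val_eq_bot_of_notMem (by simpa using hn) hn']
        exact .bot _
    obtain ⟨s, hs, _, h4⟩ := Deriv.conservative (testHom t) hP Set.subset_union_right
      (disjoint_testRule t a) Set.subset_union_left (h1.trans hP' h3)
    rwa [mapExp_inj _ hs]
  · intro d
    refine Deriv.opr (r := testRule t) (es := [(testHom t).mapExp a]) (as := []) (.inr rfl)
      (θ := fun n => (testHom t).mapExp (val t n))
      (fun n => (isPPat_mapExp _).2 (isPPat_val t n)) ?_ ?_
    · refine .cons ?_ .nil
      rw [hval]
      exact d.map _ Set.subset_union_left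
    · rw [applyList_nil, subst_testRule_rhs]
      exact .refl (isPPat_testVal t)

theorem den_subset_of_obsFO (hP : WFProg P) {e e' : Exp σ}
    (h : ∀ (τ : Sig) (ι : SigHom σ τ) (P' : Program τ), WFProg P' →
        SafeExt (ι.mapProg P) P' (ι.mapExp e) →
        SafeExt (ι.mapProg P) P' (ι.mapExp e') →
        ∀ C : Cntxt τ,
          ObsFO P' (C.fill (ι.mapExp e)) = ObsFO P' (C.fill (ι.mapExp e'))) :
    den P e ⊆ den P e' := by
  intro t ht
  have hobs := h (testSig t) (testHom t) (testProg P t) (wfProg_testProg hP ht.1)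
    (safeExt_testProg t e) (safeExt_testProg t e') (.appR (.fn (gSym t)) .hole)
  have hmem : testVal t ∈ ObsFO (testProg P t)
      ((Cntxt.appR (.fn (gSym t)) .hole).fill ((testHom t).mapExp e)) :=
    ⟨mem_den.2 ((deriv_testVal_iff hP ht.1 e).2 ht.2), isFOPat_testVal t⟩
  rw [hobs] at hmem
  exact mem_den.2 ((deriv_testVal_iff hP ht.1 e').1 hmem.1.2)

theorem obsFO_subset_of_den (hP : WFProg P) {e e' : Exp σ} (h : den P e ⊆ den P e') {τ : Sig}
    (ι : SigHom σ τ) {P' : Program τ} (hP' : WFProg P')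
    (hs : SafeExt (ι.mapProg P) P' (ι.mapExp e)) (C : Cntxt τ) :
    ObsFO P' (C.fill (ι.mapExp e)) ⊆ ObsFO P' (C.fill (ι.mapExp e')) := by
  obtain ⟨P'', rfl, _, hdisj⟩ := hs
  rintro t ⟨ht, hfo⟩
  refine ⟨mem_den.2 (Deriv.fill_mono hP' (fun s hs => ?_) C ht.2), hfo⟩
  obtain ⟨s, rfl, _, hs⟩ := Deriv.conservative ι hP Set.subset_union_right hdisj
    Set.subset_union_left hs
  exact (mem_den.1 (h (mem_den.2 hs))).map ι Set.subset_union_left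

/-- **Theorem 2 (full abstraction wrt `Obs_FO`)**: for a program `P` without
extra variables and total expressions `e, e'`, `⟦e⟧^P = ⟦e'⟧^P` iff
`Obs_FO^{P'}(C[e]) = Obs_FO^{P'}(C[e'])` for every program `P'` (over any
extension of the signature) safely extending both `(P, e)` and `(P, e')` and
every context `C` built with the signature of `P'`. -/
theorem full_abstraction_ObsFO (σ : Sig) (P : Program σ) (hP : WFProg P)
    (e e' : Exp σ) (he : BotFree e) (he' : BotFree e') :
    den P e = den P e' ↔
      ∀ (τ : Sig) (ι : SigHom σ τ) (P' : Program τ), WFProg P' →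
        SafeExt (ι.mapProg P) P' (ι.mapExp e) →
        SafeExt (ι.mapProg P) P' (ι.mapExp e') →
        ∀ C : Cntxt τ,
          ObsFO P' (C.fill (ι.mapExp e)) = ObsFO P' (C.fill (ι.mapExp e')) := by
  constructor
  · intro h τ ι P' hP' hs hs' C
    exact (obsFO_subset_of_den hP h.subset ι hP' hs C).antisymm
      (obsFO_subset_of_den hP h.superset ι hP' hs' C)
  · intro h
    exact (den_subset_of_obsFO hP h).antisymm
      (den_subset_of_obsFO hP fun τ ι P' hP' hs hs' C => (h τ ι P' hP' hs' hs C).symm)
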